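/- arXiv:2011.07606 — 2 statements merged into one kernel-verified Lean document; each statement's English description precedes it below -/
import Mathlib

section
/- Let a_e > b_e > 0, let f = √(a_e² − b_e²) > 0, and let (X, Y) ∈ ℝ² with X > 0, Y > 0 and X²/a_e² + Y²/b_e² = 1. Set T = X² + Y² + f², Δ = T² − 4X²f², and A = (T − √Δ)/2. Then A = f²·X²/a_e², and consequently a_e·√A/f = X and (b_e/f)·√(f² − A) = Y; that is, for a point lying on the ellipse, the confocal-hyperbola intersection point (X_I, Y_I) coincides with the point itself and the confocal hyperbola distance vanishes. -/
/-!
The number `A` is the smaller root of `z² - T z + X² f²`. On the ellipse, `Y² = bₑ² (1 - X²/aₑ²)`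
and `f² = aₑ² - bₑ²` give `T = f² X²/aₑ² + aₑ²`, so by Vieta the two roots are `f² X²/aₑ²` and
`aₑ²`. The first is at most `f² ≤ aₑ²`, hence it is `A`. The ellipse equation also gives
`f² - A = f² Y²/bₑ²`, so both square roots in the intersection point are explicit.
-/

/-- The squared semi-transverse axis `A` of the hyperbola with foci `(±f, 0)` through `(X, Y)`
(degenerate for points on the axes), written as the smaller root of
`z² - (X² + Y² + f²) z + X² f²`. -/
noncomputable def confocalParameter (f X Y : ℝ) : ℝ :=
  (X ^ 2 + Y ^ 2 + f ^ 2 - √((X ^ 2 + Y ^ 2 + f ^ 2) ^ 2 - 4 * X ^ 2 * f ^ 2)) / 2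

theorem half_add_sub_sqrt_discrim_eq_min (r s : ℝ) :
    (r + s - √((r + s) ^ 2 - 4 * (r * s))) / 2 = min r s := by
  have discrim_eq_sq : (r + s) ^ 2 - 4 * (r * s) = (s - r) ^ 2 := by ring
  rw [discrim_eq_sq, Real.sqrt_sq_eq_abs, inf_eq_half_smul_add_sub_abs_sub' ℝ, smul_eq_mul,
    div_eq_inv_mul]

theorem confocalParameter_eq_min {f X Y r s : ℝ} (hadd : X ^ 2 + Y ^ 2 + f ^ 2 = r + s)
    (hmul : X ^ 2 * f ^ 2 = r * s) : confocalParameter f X Y = min r s := by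
  rw [confocalParameter, hadd, mul_assoc, hmul, half_add_sub_sqrt_discrim_eq_min]

section Ellipse

variable {K : Type*} [Field K] {a b f x y : K}

theorem sq_add_sq_add_sq_focal_of_ellipse (ha : a ≠ 0) (hb : b ≠ 0) (hf : f ^ 2 = a ^ 2 - b ^ 2)
    (h : x ^ 2 / a ^ 2 + y ^ 2 / b ^ 2 = 1) :
    x ^ 2 + y ^ 2 + f ^ 2 = f ^ 2 * x ^ 2 / a ^ 2 + a ^ 2 := by
  have hx : x ^ 2 = a ^ 2 * (x ^ 2 / a ^ 2) := by field_simp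
  have hy : y ^ 2 = b ^ 2 * (y ^ 2 / b ^ 2) := by field_simp
  linear_combination hx + hy + b ^ 2 * h + (1 - x ^ 2 / a ^ 2) * hf

theorem sq_focal_sub_of_ellipse (f : K) (h : x ^ 2 / a ^ 2 + y ^ 2 / b ^ 2 = 1) :
    f ^ 2 - f ^ 2 * x ^ 2 / a ^ 2 = f ^ 2 * y ^ 2 / b ^ 2 := by
  linear_combination -f ^ 2 * h

theorem sq_focal_mul_div_le_of_ellipse [LinearOrder K] [IsStrictOrderedRing K]
    (hf : f ^ 2 = a ^ 2 - b ^ 2) (h : x ^ 2 / a ^ 2 + y ^ 2 / b ^ 2 = 1) :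
    f ^ 2 * x ^ 2 / a ^ 2 ≤ a ^ 2 :=
  calc
    f ^ 2 * x ^ 2 / a ^ 2 ≤ f ^ 2 :=
      sub_nonneg.mp <| (sq_focal_sub_of_ellipse f h).symm ▸ by positivity
    _ ≤ a ^ 2 := hf.trans_le (sub_le_self _ (sq_nonneg b))

end Ellipse

theorem confocalParameter_of_ellipse {a b f X Y : ℝ} (ha : a ≠ 0) (hb : b ≠ 0)
    (hf : f ^ 2 = a ^ 2 - b ^ 2) (h : X ^ 2 / a ^ 2 + Y ^ 2 / b ^ 2 = 1) :
    confocalParameter f X Y = f ^ 2 * X ^ 2 / a ^ 2 := by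
  have hmul : X ^ 2 * f ^ 2 = f ^ 2 * X ^ 2 / a ^ 2 * a ^ 2 := by field_simp
  rw [confocalParameter_eq_min (sq_add_sq_add_sq_focal_of_ellipse ha hb hf h) hmul,
    min_eq_left (sq_focal_mul_div_le_of_ellipse hf h)]

theorem mul_sqrt_sq_mul_sq_div_sq_div_eq_abs {a f : ℝ} (ha : 0 < a) (hf : 0 < f) (x : ℝ) :
    a * √(f ^ 2 * x ^ 2 / a ^ 2) / f = |x| := by
  have hsqrt : √(f ^ 2 * x ^ 2 / a ^ 2) = f * |x| / a := by
    rw [← mul_pow, ← div_pow, Real.sqrt_sq_eq_abs, abs_div, abs_mul, abs_of_pos hf, abs_of_pos ha]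
  rw [hsqrt]
  field_simp

theorem on_ellipse_intersection_is_self_general {ae be f X Y : ℝ} (hab : be < ae) (hb : 0 < be)
    (hf : f = √(ae ^ 2 - be ^ 2)) (hellipse : X ^ 2 / ae ^ 2 + Y ^ 2 / be ^ 2 = 1) :
    confocalParameter f X Y = f ^ 2 * X ^ 2 / ae ^ 2 ∧
      ae * √(confocalParameter f X Y) / f = |X| ∧
      be / f * √(f ^ 2 - confocalParameter f X Y) = |Y| := by
  have ha : 0 < ae := hb.trans hab
  have hsub : 0 < ae ^ 2 - be ^ 2 := sub_pos.mpr (by gcongr)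
  have hfpos : 0 < f := hf ▸ Real.sqrt_pos.mpr hsub
  have hfsq : f ^ 2 = ae ^ 2 - be ^ 2 := hf ▸ Real.sq_sqrt hsub.le
  have hA := confocalParameter_of_ellipse ha.ne' hb.ne' hfsq hellipse
  refine ⟨hA, ?_, ?_⟩
  · rw [hA, mul_sqrt_sq_mul_sq_div_sq_div_eq_abs ha hfpos]
  · rw [hA, sq_focal_sub_of_ellipse f hellipse, div_mul_eq_mul_div,
      mul_sqrt_sq_mul_sq_div_sq_div_eq_abs hb hfpos]

/-- Let `a_e > b_e > 0`, `f = √(a_e² − b_e²) > 0`, and `(X, Y)` with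
`X > 0`, `Y > 0`, and `X²/a_e² + Y²/b_e² = 1`. Set `T = X² + Y² + f²`,
`Δ = T² − 4X²f²`, `A = (T − √Δ)/2`. Then `A = f²·X²/a_e²`, `a_e·√A/f = X`, and
`(b_e/f)·√(f² − A) = Y`; i.e. for a point on the ellipse the confocal-hyperbola
intersection point coincides with the point itself and the distance vanishes. -/
theorem on_ellipse_intersection_is_self (ae be f X Y T Δ A : ℝ)
    (hab : be < ae) (hb : 0 < be)
    (hf : f = Real.sqrt (ae ^ 2 - be ^ 2)) (hfpos : 0 < f)
    (hX : 0 < X) (hY : 0 < Y)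
    (hellipse : X ^ 2 / ae ^ 2 + Y ^ 2 / be ^ 2 = 1)
    (hT : T = X ^ 2 + Y ^ 2 + f ^ 2) (hΔ : Δ = T ^ 2 - 4 * X ^ 2 * f ^ 2)
    (hA : A = (T - Real.sqrt Δ) / 2) :
    A = f ^ 2 * X ^ 2 / ae ^ 2 ∧
    ae * Real.sqrt A / f = X ∧
    (be / f) * Real.sqrt (f ^ 2 - A) = Y := by
  subst hT hΔ hA
  simpa only [confocalParameter, abs_of_pos hX, abs_of_pos hY] using
    on_ellipse_intersection_is_self_general hab hb hf hellipse
end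

section
/- Let a, b > 0, θ ∈ ℝ, and (x_c, y_c) ∈ ℝ², and define d(x, y) = (((x − x_c)cos θ + (y − y_c)sin θ)/a)² + ((−(x − x_c)sin θ + (y − y_c)cos θ)/b)² − 1. Then the gradient ∇d vanishes at (x_c, y_c) and at no other point, and the Sampson distance |d(x, y)| / ‖∇d(x, y)‖ tends to +∞ as (x, y) tends to (x_c, y_c) through points (x, y) ≠ (x_c, y_c). -/
/-!
A central quadric is `d p = ⟪A (p - c), p - c⟫ - r` with `A` self-adjoint, so `∇d p = 2 A (p - c)`.
If `A` is injective, the gradient tends to `0` at the center without vanishing near it, while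
`d p → -r ≠ 0`; hence `|d p| / ‖∇d p‖ → ∞`. The ellipse is the case `A = T† T`, `r = 1`, where `T`
is the invertible linear map carrying the centered ellipse onto the unit circle.
-/

open Filter Topology InnerProductSpace Gradient

section Sampson

variable {E : Type*} [NormedAddCommGroup E] [InnerProductSpace ℝ E] [CompleteSpace E]

/-- The Sampson distance of `p` to the hypersurface `f = 0`. Where the gradient vanishes it takes
the junk value `0`, so its behaviour there has to be expressed by limits. -/
noncomputable def sampsonDistance (f : E → ℝ) (p : E) : ℝ :=
  |f p| / ‖∇ f p‖

theorem tendsto_sampsonDistance_atTop {f : E → ℝ} {l : Filter E} {y : ℝ} (hy : y ≠ 0)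
    (hf : Tendsto f l (𝓝 y)) (hgrad : Tendsto (∇ f) l (𝓝[≠] 0)) :
    Tendsto (sampsonDistance f) l atTop := by
  have hnorm : Tendsto (fun p => ‖∇ f p‖) l (𝓝[>] 0) := by
    rwa [← comap_norm_nhdsGT_zero, tendsto_comap_iff] at hgrad
  exact hf.abs.pos_mul_atTop (abs_pos.mpr hy) hnorm.inv_tendsto_nhdsGT_zero

end Sampson

section CentralQuadric

variable {E : Type*} [NormedAddCommGroup E] [InnerProductSpace ℝ E]

/-- The defining function `⟪A (p - c), p - c⟫ - r` of the quadric with center `c`, quadratic part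
`A` and level `r`. -/
noncomputable def centralQuadric (A : E →L[ℝ] E) (c : E) (r : ℝ) (p : E) : ℝ :=
  ⟪A (p - c), p - c⟫_ℝ - r

theorem centralQuadric_center (A : E →L[ℝ] E) (c : E) (r : ℝ) :
    centralQuadric A c r c = -r := by
  simp [centralQuadric]

theorem continuous_centralQuadric (A : E →L[ℝ] E) (c : E) (r : ℝ) :
    Continuous (centralQuadric A c r) := by
  unfold centralQuadric
  fun_prop

variable [CompleteSpace E] {A : E →L[ℝ] E}

theorem hasGradientAt_centralQuadric (hA : IsSelfAdjoint A) (c : E) (r : ℝ) (p : E) :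
    HasGradientAt (centralQuadric A c r) ((2 : ℝ) • A (p - c)) p := by
  rw [hasGradientAt_iff_hasFDerivAt]
  have hform := (hA.isSymmetric.hasStrictFDerivAt_reApplyInnerSelf (p - c)).hasFDerivAt
  have hquadric := (hasFDerivAt_comp_sub (f := A.reApplyInnerSelf) c).mpr hform |>.sub_const r
  refine hquadric.congr_fderiv ?_
  ext v
  simp

theorem gradient_centralQuadric (hA : IsSelfAdjoint A) (c : E) (r : ℝ) :
    ∇ (centralQuadric A c r) = fun p => (2 : ℝ) • A (p - c) :=
  gradient_eq (hasGradientAt_centralQuadric hA c r)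

theorem gradient_centralQuadric_eq_zero_iff (hA : IsSelfAdjoint A)
    (hinj : Function.Injective A) {c : E} {r : ℝ} {p : E} :
    ∇ (centralQuadric A c r) p = 0 ↔ p = c := by
  simp [gradient_centralQuadric hA, sub_eq_zero, hinj.eq_iff]

theorem tendsto_gradient_centralQuadric_center (hA : IsSelfAdjoint A)
    (hinj : Function.Injective A) (c : E) (r : ℝ) :
    Tendsto (∇ (centralQuadric A c r)) (𝓝[≠] c) (𝓝[≠] 0) := by
  refine tendsto_nhdsWithin_iff.mpr ⟨?_, ?_⟩
  · have hcont : Continuous (∇ (centralQuadric A c r)) := by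
      rw [gradient_centralQuadric hA]
      fun_prop
    have hcenter := (gradient_centralQuadric_eq_zero_iff hA hinj (r := r)).mpr (Eq.refl c)
    exact (hcont.tendsto' c 0 hcenter).mono_left nhdsWithin_le_nhds
  · filter_upwards [self_mem_nhdsWithin] with p hp
    exact mt (gradient_centralQuadric_eq_zero_iff hA hinj).mp hp

theorem sampson_distance_blows_up_at_center_general (hA : IsSelfAdjoint A)
    (hinj : Function.Injective A) (c : E) {r : ℝ} (hr : r ≠ 0) :
    ∇ (centralQuadric A c r) c = 0 ∧
    (∀ p, ∇ (centralQuadric A c r) p = 0 → p = c) ∧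
    Tendsto (sampsonDistance (centralQuadric A c r)) (𝓝[≠] c) atTop := by
  have hzero {p} := gradient_centralQuadric_eq_zero_iff hA hinj (c := c) (r := r) (p := p)
  have hvalue : Tendsto (centralQuadric A c r) (𝓝[≠] c) (𝓝 (-r)) :=
    ((continuous_centralQuadric A c r).tendsto' c _ (centralQuadric_center A c r)).mono_left
      nhdsWithin_le_nhds
  exact ⟨hzero.mpr rfl, fun _ => hzero.mp,
    tendsto_sampsonDistance_atTop (neg_ne_zero.mpr hr) hvalue
      (tendsto_gradient_centralQuadric_center hA hinj c r)⟩

end CentralQuadric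

section Ellipse

/-- Rotation by `-θ` followed by scaling the axes by `1 / a` and `1 / b`: the linear map carrying
the centered ellipse with semi-axes `a`, `b` and rotation `θ` onto the unit circle. -/
noncomputable def ellipseToCircle (a b θ : ℝ) :
    EuclideanSpace ℝ (Fin 2) →L[ℝ] EuclideanSpace ℝ (Fin 2) :=
  Matrix.toEuclideanCLM (n := Fin 2) (𝕜 := ℝ)
    !![Real.cos θ / a, Real.sin θ / a; -Real.sin θ / b, Real.cos θ / b]

theorem isUnit_ellipseToCircle {a b : ℝ} (ha : a ≠ 0) (hb : b ≠ 0) (θ : ℝ) :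
    IsUnit (ellipseToCircle a b θ) := by
  refine IsUnit.map (Matrix.toEuclideanCLM (n := Fin 2) (𝕜 := ℝ)) ?_
  rw [Matrix.isUnit_iff_isUnit_det, isUnit_iff_ne_zero, Matrix.det_fin_two_of]
  have hdet : Real.cos θ / a * (Real.cos θ / b) - Real.sin θ / a * (-Real.sin θ / b)
      = 1 / (a * b) := by
    rw [← Real.cos_sq_add_sin_sq θ]
    ring
  rw [hdet]
  positivity

theorem norm_sq_ellipseToCircle (a b θ : ℝ) (x : EuclideanSpace ℝ (Fin 2)) :
    ‖ellipseToCircle a b θ x‖ ^ 2 =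
      ((x 0 * Real.cos θ + x 1 * Real.sin θ) / a) ^ 2 +
        ((-x 0 * Real.sin θ + x 1 * Real.cos θ) / b) ^ 2 := by
  rw [EuclideanSpace.real_norm_sq_eq, Fin.sum_univ_two]
  simp only [ellipseToCircle, Matrix.ofLp_toEuclideanCLM, Matrix.mulVec, dotProduct,
    Matrix.of_apply, Matrix.cons_val', Matrix.cons_val_fin_one, Matrix.cons_val_zero,
    Matrix.cons_val_one, Fin.sum_univ_two]
  ring

/-- The quadratic part of the ellipse, the Gram operator `T† T` of `T = ellipseToCircle a b θ`. -/
noncomputable def ellipseForm (a b θ : ℝ) :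
    EuclideanSpace ℝ (Fin 2) →L[ℝ] EuclideanSpace ℝ (Fin 2) :=
  star (ellipseToCircle a b θ) * ellipseToCircle a b θ

theorem isSelfAdjoint_ellipseForm (a b θ : ℝ) : IsSelfAdjoint (ellipseForm a b θ) :=
  IsSelfAdjoint.star_mul_self _

theorem injective_ellipseForm {a b : ℝ} (ha : a ≠ 0) (hb : b ≠ 0) (θ : ℝ) :
    Function.Injective (ellipseForm a b θ) :=
  have hunit := isUnit_ellipseToCircle ha hb θ
  (ContinuousLinearMap.isUnit_iff_bijective.mp (hunit.star.mul hunit)).injective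

theorem centralQuadric_ellipseForm (a b θ : ℝ) (c p : EuclideanSpace ℝ (Fin 2)) :
    centralQuadric (ellipseForm a b θ) c 1 p =
      (((p 0 - c 0) * Real.cos θ + (p 1 - c 1) * Real.sin θ) / a) ^ 2 +
        ((-(p 0 - c 0) * Real.sin θ + (p 1 - c 1) * Real.cos θ) / b) ^ 2 - 1 := by
  have hnorm : ⟪ellipseForm a b θ (p - c), p - c⟫_ℝ = ‖ellipseToCircle a b θ (p - c)‖ ^ 2 :=
    ((ellipseToCircle a b θ).apply_norm_sq_eq_inner_adjoint_left (p - c)).symm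
  rw [centralQuadric, hnorm, norm_sq_ellipseToCircle, PiLp.sub_apply, PiLp.sub_apply]

end Ellipse

/-- Let `a, b > 0`, `θ ∈ ℝ`, `(x_c, y_c) ∈ ℝ²`, and let
`d(x, y) = (((x − x_c)cos θ + (y − y_c)sin θ)/a)² + ((−(x − x_c)sin θ + (y − y_c)cos θ)/b)² − 1`.
Then the gradient `∇d` vanishes at `(x_c, y_c)` and at no other point, and the
Sampson distance `|d| / ‖∇d‖` tends to `+∞` as the point tends to `(x_c, y_c)`
through points different from the center. -/
theorem sampson_distance_blows_up_at_center (a b θ xc yc : ℝ)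
    (ha : 0 < a) (hb : 0 < b)
    (d : EuclideanSpace ℝ (Fin 2) → ℝ)
    (hd : ∀ p : EuclideanSpace ℝ (Fin 2),
      d p = (((p 0 - xc) * Real.cos θ + (p 1 - yc) * Real.sin θ) / a) ^ 2 +
        ((-(p 0 - xc) * Real.sin θ + (p 1 - yc) * Real.cos θ) / b) ^ 2 - 1)
    (c : EuclideanSpace ℝ (Fin 2)) (hc0 : c 0 = xc) (hc1 : c 1 = yc) :
    gradient d c = 0 ∧
    (∀ p : EuclideanSpace ℝ (Fin 2), gradient d p = 0 → p = c) ∧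
    Filter.Tendsto (fun p : EuclideanSpace ℝ (Fin 2) => |d p| / ‖gradient d p‖)
      (nhdsWithin c {p | p ≠ c}) Filter.atTop := by
  obtain rfl : d = centralQuadric (ellipseForm a b θ) c 1 := by
    funext p
    rw [hd, centralQuadric_ellipseForm, hc0, hc1]
  exact sampson_distance_blows_up_at_center_general (isSelfAdjoint_ellipseForm a b θ)
    (injective_ellipseForm ha.ne' hb.ne' θ) c one_ne_zero
end
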